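/- Let M be a locally compact metric space with a continuous flow, X a compact invariant proper subset, and (γₙ) an X-ω-shell: a sequence of orbits in U \ X (U a compact neighbourhood of X) with γₙ ⊆ B⁻(X), γₙ₊₁ ⊆ ω(γₙ), γₙ ⊄ cl(γₙ₊₁), and sup{dist(y,X) : y ∈ cl γₙ} → 0. Then the orbit closures satisfy cl γ₁ ⊋ cl γ₂ ⊋ ⋯ (a strictly decreasing chain), the γₙ are pairwise distinct, and cl γₙ converges in the Hausdorff metric to ⋂ₙ cl γₙ, which is a nonempty compact connected invariant subset of X. -/

import Mathlib

open Set Filter Metric Topology TopologicalSpace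

variable {M : Type*} [MetricSpace M]

/-- The full orbit of a point under a flow. -/
def orbit (ϕ : Flow ℝ M) (x : M) : Set M := Set.range fun t => ϕ t x

/-- The positive (forward) half orbit. -/
def posOrbit (ϕ : Flow ℝ M) (x : M) : Set M := {y | ∃ t : ℝ, 0 ≤ t ∧ ϕ t x = y}

/-- The negative (backward) half orbit. -/
def negOrbit (ϕ : Flow ℝ M) (x : M) : Set M := {y | ∃ t : ℝ, t ≤ 0 ∧ ϕ t x = y}

/-- Positive orbital saturation of a set. -/
def posSat (ϕ : Flow ℝ M) (s : Set M) : Set M := ⋃ x ∈ s, posOrbit ϕ x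

/-- The ω-limit set of a point. -/
def omegaSet (ϕ : Flow ℝ M) (x : M) : Set M :=
  ⋂ t : ℝ, closure {y | ∃ s : ℝ, t ≤ s ∧ ϕ s x = y}

/-- The α-limit set of a point. -/
def alphaSet (ϕ : Flow ℝ M) (x : M) : Set M :=
  ⋂ t : ℝ, closure {y | ∃ s : ℝ, s ≤ t ∧ ϕ s x = y}

/-- A set is invariant under the flow. -/
def flowInv (ϕ : Flow ℝ M) (s : Set M) : Prop := ∀ t : ℝ, ϕ t '' s = s

/-- Stability of a set: every neighbourhood contains a positively invariant neighbourhood. -/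
def Stable (ϕ : Flow ℝ M) (K : Set M) : Prop :=
  ∀ U ∈ 𝓝ˢ K, ∃ V ∈ 𝓝ˢ K, posSat ϕ V ⊆ U

/-- The set of points whose ω-limit set is nonempty and contained in `K`. -/
def Bplus (ϕ : Flow ℝ M) (K : Set M) : Set M :=
  {x | (omegaSet ϕ x).Nonempty ∧ omegaSet ϕ x ⊆ K}

/-- `K` is an attractor: stable and `B⁺(K)` is a neighbourhood of `K`. -/
def IsAttractor (ϕ : Flow ℝ M) (K : Set M) : Prop :=
  Stable ϕ K ∧ Bplus ϕ K ∈ 𝓝ˢ K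

/-- `K` is a repeller: an attractor for the time-reversed flow. -/
def IsRepeller (ϕ : Flow ℝ M) (K : Set M) : Prop :=
  IsAttractor ϕ.reverse K

/-- A minimal set of the flow. -/
def IsMinimalSet (ϕ : Flow ℝ M) (s : Set M) : Prop :=
  s.Nonempty ∧ IsClosed s ∧ flowInv ϕ s ∧
    ∀ t, t ⊆ s → t.Nonempty → IsClosed t → flowInv ϕ t → t = s

/-- `K` is stagnant. -/
def Stagnant (ϕ : Flow ℝ M) (K : Set M) : Prop :=
  ∃ x ∉ K, ∃ y ∉ K, (alphaSet ϕ x).Nonempty ∧ alphaSet ϕ x ⊆ K ∧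
    (omegaSet ϕ y).Nonempty ∧ omegaSet ϕ y ⊆ K

/-- `K` is isolated from minimal sets. -/
def IsolatedFromMinimals (ϕ : Flow ℝ M) (K : Set M) : Prop :=
  ∃ U ∈ 𝓝ˢ K, ∀ s, s ⊆ U \ K → ¬ IsMinimalSet ϕ s

/-- `x` is a periodic point with minimal period `p`: the set of periods is `pℤ`. -/
def MinPeriod (ϕ : Flow ℝ M) (x : M) (p : ℝ) : Prop :=
  0 < p ∧ {t : ℝ | ϕ t x = x} = {t : ℝ | ∃ n : ℤ, t = n * p}

/-- `x` is an equilibrium. -/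
def IsEquilibrium (ϕ : Flow ℝ M) (x : M) : Prop := ∀ t : ℝ, ϕ t x = x

/-!
The closure of an orbit is invariant, so it contains the closure of the orbit of each of its points.
A sequence of orbits, each starting in the closure of the one before, therefore has decreasing
closures, and these are compact and connected as soon as the first one is compact. By compactness,
every neighbourhood of the intersection contains all but finitely many of the closures. This gives
the Hausdorff convergence, and also the connectedness, because a separation of the intersection by
disjoint open sets would separate one of the closures.
-/

section DirectedIntersection

variable {ι α : Type*} {K : ι → Set α}

theorem iInter_subset_of_forall_exists_subset_thickening [PseudoEMetricSpace α] {X : Set α}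
    (hX : IsClosed X) (hK : ∀ ε > (0 : ℝ), ∃ i, K i ⊆ thickening ε X) : ⋂ i, K i ⊆ X := by
  rw [← hX.closure_eq, closure_eq_iInter_thickening]
  refine subset_iInter₂ fun ε hε => ?_
  obtain ⟨i, hi⟩ := hK ε hε
  exact (iInter_subset K i).trans hi

variable [Nonempty ι]

theorem isPreconnected_iInter_of_directed_isCompact [TopologicalSpace α] [T2Space α]
    (hdir : Directed (· ⊇ ·) K) (hcomp : ∀ i, IsCompact (K i))
    (hconn : ∀ i, IsPreconnected (K i)) : IsPreconnected (⋂ i, K i) := by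
  have hclosed : IsClosed (⋂ i, K i) := isClosed_iInter fun i => (hcomp i).isClosed
  have hcompact : IsCompact (⋂ i, K i) :=
    (hcomp (Classical.arbitrary ι)).of_isClosed_subset hclosed (iInter_subset K _)
  rw [isPreconnected_iff_subset_of_fully_disjoint_closed hclosed]
  intro A B hA hB hAB hdisj
  obtain ⟨U, V, hU, hV, hAU, hBV, hUV⟩ : SeparatedNhds ((⋂ i, K i) ∩ A) ((⋂ i, K i) ∩ B) :=
    .of_isCompact_isCompact (hcompact.inter_right hA) (hcompact.inter_right hB)
      (hdisj.mono inter_subset_right inter_subset_right)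
  have hcover : ⋂ i, K i ⊆ U ∪ V := fun x hx =>
    (hAB hx).imp (fun hxA => hAU ⟨hx, hxA⟩) (fun hxB => hBV ⟨hx, hxB⟩)
  obtain ⟨i, hi⟩ : ∃ i, K i ⊆ U ∪ V :=
    exists_subset_nhds_of_isCompact hdir hcomp fun x hx => (hU.union hV).mem_nhds (hcover hx)
  rcases (hconn i).subset_or_subset hU hV hUV hi with hKU | hKV
  · refine Or.inl fun x hx => (hAB hx).resolve_right fun hxB => ?_
    exact disjoint_left.1 hUV (hKU (mem_iInter.1 hx i)) (hBV ⟨hx, hxB⟩)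
  · refine Or.inr fun x hx => (hAB hx).resolve_left fun hxA => ?_
    exact disjoint_left.1 hUV (hAU ⟨hx, hxA⟩) (hKV (mem_iInter.1 hx i))

theorem isConnected_iInter_of_directed_isCompact [TopologicalSpace α] [T2Space α]
    (hdir : Directed (· ⊇ ·) K) (hcomp : ∀ i, IsCompact (K i))
    (hconn : ∀ i, IsConnected (K i)) : IsConnected (⋂ i, K i) :=
  ⟨IsCompact.nonempty_iInter_of_directed_nonempty_isCompact_isClosed K hdir
      (fun i => (hconn i).nonempty) hcomp fun i => (hcomp i).isClosed,
    isPreconnected_iInter_of_directed_isCompact hdir hcomp fun i => (hconn i).isPreconnected⟩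

theorem tendsto_hausdorffEDist_iInter_of_antitone_isCompact [EMetricSpace α] [Preorder ι]
    [IsDirectedOrder ι] (hanti : Antitone K) (hcomp : ∀ i, IsCompact (K i)) :
    Tendsto (fun i => hausdorffEDist (K i) (⋂ j, K j)) atTop (𝓝 0) := by
  refine ENNReal.tendsto_nhds_zero.2 fun ε hε => ?_
  have hopen : IsOpen {x | infEDist x (⋂ j, K j) < ε} :=
    isOpen_lt continuous_infEDist continuous_const
  obtain ⟨N, hN⟩ : ∃ N, K N ⊆ {x | infEDist x (⋂ j, K j) < ε} :=
    exists_subset_nhds_of_isCompact hanti.directed_ge hcomp fun x hx =>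
      hopen.mem_nhds ((infEDist_zero_of_mem hx).trans_lt hε)
  filter_upwards [eventually_ge_atTop N] with i hNi
  refine hausdorffEDist_le_of_infEDist (fun x hx => (hN (hanti hNi hx)).le) fun x hx => ?_
  exact (infEDist_zero_of_mem (mem_iInter.1 hx i)).trans_le zero_le

end DirectedIntersection

section Orbits

variable {ϕ : Flow ℝ M}

theorem flowInv_iff_isInvariant {s : Set M} : flowInv ϕ s ↔ IsInvariant ϕ s :=
  (ϕ.isInvariant_iff_image_eq s).symm

protected theorem flowInv.closure {s : Set M} (hs : flowInv ϕ s) : flowInv ϕ (closure s) :=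
  fun t => ((ϕ.toHomeomorph t).image_closure s).trans (congrArg closure (hs t))

protected theorem flowInv.iInter {ι : Sort*} {s : ι → Set M} (hs : ∀ i, flowInv ϕ (s i)) :
    flowInv ϕ (⋂ i, s i) :=
  fun t => (image_iInter (ϕ.toHomeomorph t).bijective s).trans (iInter_congr fun i => hs i t)

theorem flowInv.orbit_subset {s : Set M} (hs : flowInv ϕ s) {x : M} (hx : x ∈ s) :
    orbit ϕ x ⊆ s :=
  range_subset_iff.2 fun t => flowInv_iff_isInvariant.1 hs t hx

variable (ϕ)

theorem flowInv_orbit (x : M) : flowInv ϕ (orbit ϕ x) :=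
  flowInv_iff_isInvariant.2 (ϕ.isInvariant_orbit x)

theorem isConnected_orbit (x : M) : IsConnected (orbit ϕ x) :=
  isConnected_range (ϕ.continuous continuous_id continuous_const)

theorem omegaSet_subset_closure_orbit (x : M) : omegaSet ϕ x ⊆ closure (orbit ϕ x) :=
  (iInter_subset _ 0).trans (closure_mono fun _ ⟨s, _, hs⟩ => ⟨s, hs⟩)

variable {ϕ}

theorem closure_orbit_subset_of_mem {x y : M} (hy : y ∈ closure (orbit ϕ x)) :
    closure (orbit ϕ y) ⊆ closure (orbit ϕ x) :=
  closure_minimal ((flowInv_orbit ϕ x).closure.orbit_subset hy) isClosed_closure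

end Orbits

theorem omega_shell_properties_general (ϕ : Flow ℝ M) {X : Set M} (hX : IsClosed X) {z : ℕ → M}
    (hcomp : IsCompact (closure (orbit ϕ (z 0))))
    (hchain : ∀ n, z (n + 1) ∈ closure (orbit ϕ (z n)))
    (hnotback : ∀ n, ¬ orbit ϕ (z n) ⊆ closure (orbit ϕ (z (n + 1))))
    (happ : ∀ ε > (0 : ℝ), ∃ n, closure (orbit ϕ (z n)) ⊆ thickening ε X) :
    (∀ n, closure (orbit ϕ (z (n + 1))) ⊂ closure (orbit ϕ (z n))) ∧
      (∀ m n, m ≠ n → orbit ϕ (z m) ≠ orbit ϕ (z n)) ∧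
      Tendsto (fun n => hausdorffDist (closure (orbit ϕ (z n)))
          (⋂ k, closure (orbit ϕ (z k)))) atTop (𝓝 0) ∧
      (⋂ k, closure (orbit ϕ (z k))).Nonempty ∧
      IsCompact (⋂ k, closure (orbit ϕ (z k))) ∧
      IsConnected (⋂ k, closure (orbit ϕ (z k))) ∧
      flowInv ϕ (⋂ k, closure (orbit ϕ (z k))) ∧
      (⋂ k, closure (orbit ϕ (z k))) ⊆ X := by
  set K : ℕ → Set M := fun n => closure (orbit ϕ (z n))
  have hssubset (n : ℕ) : K (n + 1) ⊂ K n :=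
    ⟨closure_orbit_subset_of_mem (hchain n), fun h => hnotback n (subset_closure.trans h)⟩
  have hanti : StrictAnti K := strictAnti_nat_of_succ_lt hssubset
  have hdir : Directed (· ⊇ ·) K := hanti.antitone.directed_ge
  have hKcomp (n : ℕ) : IsCompact (K n) :=
    hcomp.of_isClosed_subset isClosed_closure (hanti.antitone n.zero_le)
  have hconn : IsConnected (⋂ k, K k) :=
    isConnected_iInter_of_directed_isCompact hdir hKcomp fun n =>
      (isConnected_orbit ϕ (z n)).closure
  have hlim : Tendsto (fun n => hausdorffDist (K n) (⋂ k, K k)) atTop (𝓝 0) :=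
    (ENNReal.tendsto_toReal ENNReal.zero_ne_top).comp
      (tendsto_hausdorffEDist_iInter_of_antitone_isCompact hanti.antitone hKcomp)
  exact ⟨hssubset, fun m n hmn h => hmn (hanti.injective (congrArg closure h)), hlim,
    hconn.nonempty,
    hcomp.of_isClosed_subset (isClosed_iInter fun _ => isClosed_closure) (iInter_subset K 0),
    hconn, flowInv.iInter fun n => (flowInv_orbit ϕ (z n)).closure,
    iInter_subset_of_forall_exists_subset_thickening hX happ⟩

theorem omega_shell_properties
    {M : Type*} [MetricSpace M] [LocallyCompactSpace M]
    (ϕ : Flow ℝ M) (X : Set M)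
    (hXc : IsCompact X) (hXinv : flowInv ϕ X) (hproper : X ≠ Set.univ)
    (U : Set M) (hUc : IsCompact U) (hUnhd : U ∈ 𝓝ˢ X)
    (z : ℕ → M)
    (horb : ∀ n, orbit ϕ (z n) ⊆ U \ X)
    (hBminus : ∀ n, (alphaSet ϕ (z n)).Nonempty ∧ alphaSet ϕ (z n) ⊆ X)
    (hchain : ∀ n, z (n + 1) ∈ omegaSet ϕ (z n))
    (hnotback : ∀ n, ¬ orbit ϕ (z n) ⊆ closure (orbit ϕ (z (n + 1))))
    (happ : ∀ ε > (0 : ℝ), ∀ᶠ n in atTop,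
      closure (orbit ϕ (z n)) ⊆ Metric.thickening ε X) :
    (∀ n, closure (orbit ϕ (z (n + 1))) ⊂ closure (orbit ϕ (z n))) ∧
      (∀ m n, m ≠ n → orbit ϕ (z m) ≠ orbit ϕ (z n)) ∧
      Tendsto (fun n => Metric.hausdorffDist (closure (orbit ϕ (z n)))
          (⋂ k, closure (orbit ϕ (z k)))) atTop (𝓝 0) ∧
      (⋂ k, closure (orbit ϕ (z k))).Nonempty ∧
      IsCompact (⋂ k, closure (orbit ϕ (z k))) ∧
      IsConnected (⋂ k, closure (orbit ϕ (z k))) ∧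
      flowInv ϕ (⋂ k, closure (orbit ϕ (z k))) ∧
      (⋂ k, closure (orbit ϕ (z k))) ⊆ X :=
  omega_shell_properties_general ϕ hXc.isClosed
    (hUc.closure_of_subset ((horb 0).trans sdiff_subset))
    (fun n => omegaSet_subset_closure_orbit ϕ (z n) (hchain n)) hnotback
    fun ε hε => (happ ε hε).exists
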